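/- arXiv:2402.14204 — 2 statements merged into one kernel-verified Lean document; each statement's English description precedes it below -/
import Mathlib

section
/- Let n ≥ 2 and let A be a real symmetric n×n matrix with tr(A) > 0 and (tr A)² − tr(A²) > 0 (equivalently, the second elementary symmetric function S₂ of its eigenvalues is positive). Then the matrix P₁ = (tr A)·I − A is positive definite. (This is the algebraic content of Proposition 2.3.3: when the shape operator A satisfies H₂ > 0, the operator L₁ = Tr(P₁ ∘ hess) is elliptic.) -/
/-- If `A` is a real symmetric matrix with `tr A > 0` and `(tr A)² − tr(A²) > 0`,
then the first Newton tensor `P₁ = (tr A)·I − A` is positive definite. -/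
theorem newton_tensor_one_posDef (n : ℕ) (hn : 2 ≤ n)
    (A : Matrix (Fin n) (Fin n) ℝ) (hA : A.IsSymm)
    (h1 : 0 < A.trace) (h2 : 0 < A.trace ^ 2 - (A * A).trace) :
    (A.trace • (1 : Matrix (Fin n) (Fin n) ℝ) - A).PosDef := by
  refine Matrix.PosDef.of_dotProduct_mulVec_pos ?_ ?_
  · unfold Matrix.IsHermitian
    rw [Matrix.conjTranspose_eq_transpose_of_trivial, Matrix.transpose_sub,
      Matrix.transpose_smul, Matrix.transpose_one, hA.eq]
  · intro x hx
    have hxx : 0 < x ⬝ᵥ x := by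
      have h := Matrix.dotProduct_star_self_pos_iff.mpr hx
      simpa using h
    have hcs := Finset.sum_mul_sq_le_sq_mul_sq (Finset.univ : Finset (Fin n × Fin n))
      (fun p => A p.1 p.2) (fun p => x p.1 * x p.2)
    have e1 : ∑ p : Fin n × Fin n, A p.1 p.2 * (x p.1 * x p.2) = x ⬝ᵥ (A.mulVec x) := by
      rw [Fintype.sum_prod_type]
      simp only [dotProduct, Matrix.mulVec, Finset.mul_sum]
      refine Finset.sum_congr rfl fun i _ => Finset.sum_congr rfl fun j _ => by ring
    have e2 : ∑ p : Fin n × Fin n, A p.1 p.2 ^ 2 = (A * A).trace := by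
      rw [Fintype.sum_prod_type]
      simp only [Matrix.trace, Matrix.diag, Matrix.mul_apply]
      refine Finset.sum_congr rfl fun i _ => Finset.sum_congr rfl fun j _ => by
        rw [hA.apply i j, sq]
    have e3 : ∑ p : Fin n × Fin n, (x p.1 * x p.2) ^ 2 = (x ⬝ᵥ x) ^ 2 := by
      rw [Fintype.sum_prod_type, sq (x ⬝ᵥ x)]
      simp only [dotProduct, Finset.sum_mul_sum]
      refine Finset.sum_congr rfl fun i _ => Finset.sum_congr rfl fun j _ => by ring
    rw [e1, e2, e3] at hcs
    have hlt : (x ⬝ᵥ (A.mulVec x)) ^ 2 < (A.trace * (x ⬝ᵥ x)) ^ 2 := by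
      have := mul_pos h2 (pow_pos hxx 2)
      nlinarith
    have := lt_of_pow_lt_pow_left₀ 2 (mul_pos h1 hxx).le hlt
    rw [star_trivial, Matrix.sub_mulVec, Matrix.smul_mulVec, Matrix.one_mulVec,
      dotProduct_sub, dotProduct_smul, smul_eq_mul]
    linarith
end

section
/- (Euclidean case of Theorem 3.2.1.) Let n ≥ 1 and let P : ℝⁿ → Mₙ(ℝ) be a continuous map taking values in symmetric positive semidefinite matrices such that sup_{x∈ℝⁿ} tr(P(x)) < +∞; for u : ℝⁿ → ℝ of class C², define L u (x) = tr(P(x) · Hess u(x)). Let G : [0, +∞) → ℝ be a smooth function with G(0) > 0, G′(t) ≥ 0 for all t ≥ 0, ∫₀^{+∞} G(t)^{−1/2} dt = +∞, and limsup_{t→+∞} t·G(t^{1/2})/G(t) < +∞. Suppose there exists a nonnegative C² function γ : ℝⁿ → ℝ such that: (1) γ(x) → +∞ as |x| → +∞; (2) there exist A > 0 and a compact set K₁ ⊆ ℝⁿ with ‖∇γ(x)‖ ≤ A·γ(x)^{1/2} for all x ∉ K₁; (3) there exist B > 0 and a compact set K₂ ⊆ ℝⁿ with Lγ(x) ≤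 B·γ(x)^{1/2}·G(γ(x)^{1/2})^{1/2} for all x ∉ K₂. Then the Omori–Yau maximum principle holds for L on ℝⁿ: for every C² function u : ℝⁿ → ℝ with u* = sup_{ℝⁿ} u < +∞, there exists a sequence of points (x_j) in ℝⁿ such that for every j ≥ 1: u(x_j) > u* − 1/j, ‖∇u(x_j)‖ < 1/j, and Lu(x_j) < 1/j. -/
open MeasureTheory Filter

/-- The Hessian matrix of `u : ℝⁿ → ℝ` at `x`, in the standard coordinates. -/
noncomputable def hessMat {n : ℕ} (u : EuclideanSpace ℝ (Fin n) → ℝ)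
    (x : EuclideanSpace ℝ (Fin n)) : Matrix (Fin n) (Fin n) ℝ :=
  fun i j => iteratedFDeriv ℝ 2 u x ![EuclideanSpace.single i 1, EuclideanSpace.single j 1]

/-- The semidefinite elliptic operator `L u = tr(P · Hess u)`. -/
noncomputable def Lop {n : ℕ} (P : EuclideanSpace ℝ (Fin n) → Matrix (Fin n) (Fin n) ℝ)
    (u : EuclideanSpace ℝ (Fin n) → ℝ) (x : EuclideanSpace ℝ (Fin n)) : ℝ :=
  (P x * hessMat u x).trace

lemma oy_bdd {E : Type*} [TopologicalSpace E] {F : E → ℝ} (hF : Continuous F) {M : ℝ}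
    (h : ∀ᶠ x in cocompact E, F x ≤ M) : ∃ M', ∀ x, F x ≤ M' := by
  obtain ⟨K, hK, hKM⟩ := Filter.mem_cocompact.1 h
  obtain ⟨b, hb⟩ := (hK.image hF).bddAbove
  refine ⟨max M b, fun x => ?_⟩
  by_cases hx : x ∈ K
  · exact le_max_of_le_right (hb ⟨x, hx, rfl⟩)
  · exact le_max_of_le_left (hKM hx)

lemma oy_second {E : Type*} [NormedAddCommGroup E] [NormedSpace ℝ E] {w : E → ℝ}
    (hw : ContDiff ℝ 2 w) {x : E} (hx : ∀ y, w y ≤ w x) (v : E) :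
    fderiv ℝ (fderiv ℝ w) x v v ≤ 0 := by
  by_contra! hpos
  have hd : Differentiable ℝ w := hw.differentiable (by norm_num)
  have hd1 : ContDiff ℝ 1 (fderiv ℝ w) := hw.fderiv_right (by norm_num)
  have hd2 : Differentiable ℝ (fderiv ℝ w) := hd1.differentiable (by norm_num)
  let f : ℝ → ℝ := fun t => w (x + t • v)
  have hl : ∀ t : ℝ, HasDerivAt (fun t : ℝ => x + t • v) v t := by
    intro t
    simpa using ((hasDerivAt_id t).smul_const v).const_add x
  have h1 : ∀ t, HasDerivAt f (fderiv ℝ w (x + t • v) v) t := fun t =>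
    (hd (x + t • v)).hasFDerivAt.comp_hasDerivAt t (hl t)
  have h1' : deriv f = fun t => fderiv ℝ w (x + t • v) v := funext fun t => (h1 t).deriv
  have h2 : HasDerivAt (deriv f) (fderiv ℝ (fderiv ℝ w) x v v) 0 := by
    rw [h1']
    have hA : HasDerivAt (fun t : ℝ => fderiv ℝ w (x + t • v))
        (fderiv ℝ (fderiv ℝ w) (x + (0:ℝ) • v) v) 0 :=
      HasFDerivAt.comp_hasDerivAt (l := fderiv ℝ w) 0 (hd2 (x + (0:ℝ) • v)).hasFDerivAt (hl 0)
    have hev : HasFDerivAt (fun T : E →L[ℝ] ℝ => T v) (ContinuousLinearMap.apply ℝ ℝ v)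
        (fderiv ℝ w (x + (0:ℝ) • v)) := (ContinuousLinearMap.apply ℝ ℝ v).hasFDerivAt
    have hB := hev.comp_hasDerivAt (0:ℝ) hA
    have he : x + (0:ℝ) • v = x := by simp
    rw [he] at hB
    exact hB
  have hmax : IsLocalMax f 0 := Filter.Eventually.of_forall fun t => by
    simpa [f] using hx (x + t • v)
  have hmin : IsLocalMin f 0 := isLocalMin_of_deriv_deriv_pos (by rw [h2.deriv]; exact hpos)
    hmax.deriv_eq_zero (h1 0).continuousAt
  have hc : f =ᶠ[nhds 0] fun _ => f 0 := by
    filter_upwards [hmax, hmin] with t a b using le_antisymm a b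
  have : deriv (deriv f) 0 = 0 := by
    rw [hc.deriv.deriv_eq]; simp
  rw [h2.deriv] at this
  linarith

open scoped MatrixOrder Matrix.Norms.L2Operator in
lemma oy_trace {n : ℕ} {A H : Matrix (Fin n) (Fin n) ℝ} (hA : A.PosSemidef)
    (hH : ∀ v : Fin n → ℝ, ∑ i, ∑ j, v i * v j * H i j ≤ 0) : (A * H).trace ≤ 0 := by
  obtain ⟨B, rfl⟩ : ∃ B : Matrix (Fin n) (Fin n) ℝ, A = B.conjTranspose * B :=
    by
    obtain ⟨B, hB⟩ := CStarAlgebra.nonneg_iff_eq_star_mul_self.mp hA.nonneg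
    exact ⟨B, hB⟩
  rw [Matrix.mul_assoc, Matrix.trace_mul_comm]
  simp only [Matrix.trace, Matrix.diag]
  refine Finset.sum_nonpos fun k _ => ?_
  refine le_of_eq_of_le ?_ (hH (B k))
  simp only [Matrix.mul_apply, Matrix.conjTranspose_apply, Finset.sum_mul, star_trivial]
  rw [Finset.sum_comm]
  exact Finset.sum_congr rfl fun i _ => Finset.sum_congr rfl fun j _ => by ring

lemma oy_hess {n : ℕ} (u : EuclideanSpace ℝ (Fin n) → ℝ) (x : EuclideanSpace ℝ (Fin n))
    (i j : Fin n) : hessMat u x i j =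
      fderiv ℝ (fderiv ℝ u) x (EuclideanSpace.single i 1) (EuclideanSpace.single j 1) := by
  simp [hessMat, iteratedFDeriv_two_apply]

lemma oy_max {n : ℕ} {P : EuclideanSpace ℝ (Fin n) → Matrix (Fin n) (Fin n) ℝ}
    (hPsd : ∀ x, (P x).PosSemidef) {u γ : EuclideanSpace ℝ (Fin n) → ℝ}
    (hu : ContDiff ℝ 2 u) (hγ : ContDiff ℝ 2 γ) (c : ℝ) {x : EuclideanSpace ℝ (Fin n)}
    (hx : ∀ y, u y - c * γ y ≤ u x - c * γ x) :
    ‖gradient u x‖ = |c| * ‖gradient γ x‖ ∧ Lop P u x ≤ c * Lop P γ x := by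
  have hdu : Differentiable ℝ u := hu.differentiable (by norm_num)
  have hdγ : Differentiable ℝ γ := hγ.differentiable (by norm_num)
  have hdu1 : ContDiff ℝ 1 (fderiv ℝ u) := hu.fderiv_right (by norm_num)
  have hdγ1 : ContDiff ℝ 1 (fderiv ℝ γ) := hγ.fderiv_right (by norm_num)
  have hdu2 : Differentiable ℝ (fderiv ℝ u) := hdu1.differentiable (by norm_num)
  have hdγ2 : Differentiable ℝ (fderiv ℝ γ) := hdγ1.differentiable (by norm_num)
  let w : EuclideanSpace ℝ (Fin n) → ℝ := fun y => u y - c * γ y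
  have hw : ContDiff ℝ 2 w := hu.sub (contDiff_const.mul hγ)
  have hw1 : fderiv ℝ w = fun y => fderiv ℝ u y - c • fderiv ℝ γ y := by
    funext y
    exact ((hdu y).hasFDerivAt.sub ((hdγ y).hasFDerivAt.const_mul c)).fderiv
  have hw2 : fderiv ℝ (fderiv ℝ w) x
      = fderiv ℝ (fderiv ℝ u) x - c • fderiv ℝ (fderiv ℝ γ) x := by
    rw [hw1]
    exact ((hdu2 x).hasFDerivAt.sub ((hdγ2 x).hasFDerivAt.const_smul c)).fderiv
  constructor
  · have h0 : fderiv ℝ w x = 0 :=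
      IsLocalMax.fderiv_eq_zero (Filter.Eventually.of_forall hx)
    rw [hw1] at h0
    have h1 : fderiv ℝ u x = c • fderiv ℝ γ x := sub_eq_zero.1 h0
    simp only [gradient, LinearIsometryEquiv.norm_map]
    rw [h1, norm_smul, Real.norm_eq_abs]
  · have hH : hessMat w x = hessMat u x - c • hessMat γ x := by
      ext i j
      simp only [oy_hess, hw2, Matrix.sub_apply, Matrix.smul_apply]
      simp
    have hneg : (P x * hessMat w x).trace ≤ 0 := by
      refine oy_trace (hPsd x) fun v => ?_
      have := oy_second hw hx (∑ i, v i • EuclideanSpace.single i (1:ℝ))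
      refine le_of_eq_of_le ?_ this
      simp only [oy_hess, map_sum, map_smul, _root_.sum_apply,
        _root_.smul_apply, smul_eq_mul, Finset.mul_sum]
      rw [Finset.sum_comm]
      exact Finset.sum_congr rfl fun i _ => Finset.sum_congr rfl fun j _ => by ring
    rw [hH, Matrix.mul_sub, Matrix.mul_smul, Matrix.trace_sub, Matrix.trace_smul,
      smul_eq_mul] at hneg
    simpa [Lop] using hneg

/-- Abstract construction of the concave primitive. -/
lemma oy_phi {g : ℝ → ℝ} (hg : ContinuousOn g (Set.Ici 0)) (hanti : AntitoneOn g (Set.Ici 0))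
    (hpos : ∀ t, 0 ≤ t → 0 < g t) (hint : ¬ IntegrableOn g (Set.Ici 0)) :
    ∃ φ : ℝ → ℝ, Continuous φ ∧ (∀ a b, 0 ≤ a → 0 ≤ b → φ b - φ a ≤ g a * (b - a)) ∧
      (∀ t, 0 ≤ t → 0 ≤ φ t) ∧ Tendsto φ atTop atTop := by
  let k : ℝ → ℝ := fun t => g (max t 0)
  have hk : Continuous k := hg.comp_continuous (by fun_prop) fun t => le_max_right t 0
  have hka : Antitone k := fun a b hab =>
    hanti (le_max_right a 0) (le_max_right b 0) (max_le_max_right 0 hab)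
  have hkp : ∀ t, 0 < k t := fun t => hpos _ (le_max_right t 0)
  have hii : ∀ a b, IntervalIntegrable k volume a b := fun a b => hk.intervalIntegrable a b
  have hkg : ∀ a, 0 ≤ a → k a = g a := fun a ha => by simp [k, ha]
  let φ : ℝ → ℝ := fun t => ∫ s in (0:ℝ)..t, k s
  have hsub : ∀ a b, φ b - φ a = ∫ s in a..b, k s := fun a b =>
    intervalIntegral.integral_interval_sub_left (hii 0 b) (hii 0 a)
  have hmono : Monotone φ := fun a b hab => by
    have : 0 ≤ ∫ s in a..b, k s :=
      intervalIntegral.integral_nonneg hab fun s _ => (hkp s).le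
    have := hsub a b
    linarith
  refine ⟨φ, intervalIntegral.continuous_primitive hii 0, ?_, ?_, ?_⟩
  · intro a b ha hb
    rw [hsub, ← hkg a ha]
    rcases le_total a b with hab | hab
    · have := intervalIntegral.integral_mono_on hab (hii a b)
        (intervalIntegrable_const (c := k a)) fun s hs => hka hs.1
      simp at this
      linarith
    · have := intervalIntegral.integral_mono_on hab
        (intervalIntegrable_const (c := k a)) (hii b a) fun s hs => hka hs.2
      simp at this
      rw [intervalIntegral.integral_symm]
      linarith
  · intro t ht
    exact intervalIntegral.integral_nonneg ht fun s _ => (hkp s).le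
  · rcases tendsto_atTop_of_monotone hmono with h | ⟨l, hl⟩
    · exact h
    · exfalso
      apply hint
      rw [integrableOn_Ici_iff_integrableOn_Ioi]
      have hkk : IntegrableOn k (Set.Ioi 0) := by
        refine integrableOn_Ioi_of_intervalIntegral_norm_tendsto (b := id) l 0
          (fun i => (hk.integrableOn_Ioc)) tendsto_id ?_
        refine hl.congr fun t => ?_
        simp only [φ, id]
        exact intervalIntegral.integral_congr fun s _ => (Real.norm_of_nonneg (hkp s).le).symm
      exact hkk.congr_fun (fun s hs => hkg s (le_of_lt hs)) measurableSet_Ioi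

/-- Euclidean case of Theorem 3.2.1: under the stated conditions on `P`, `G` and the
exhaustion function `γ`, the Omori–Yau maximum principle holds for `L = tr(P ∘ Hess)`
on `ℝⁿ`. -/
theorem omori_yau_for_L_euclidean (n : ℕ) (hn : 1 ≤ n)
    (P : EuclideanSpace ℝ (Fin n) → Matrix (Fin n) (Fin n) ℝ)
    (hPcont : Continuous P) (hPsd : ∀ x, (P x).PosSemidef)
    (hPtr : ∃ C : ℝ, ∀ x, (P x).trace ≤ C)
    (G : ℝ → ℝ) (hGsmooth : ContDiffOn ℝ (⊤ : ℕ∞) G (Set.Ici 0))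
    (hG0 : 0 < G 0)
    (hG' : ∀ t ≥ (0 : ℝ), 0 ≤ derivWithin G (Set.Ici 0) t)
    (hGint : ¬ IntegrableOn (fun t : ℝ => (G t) ^ (-(1 / 2) : ℝ)) (Set.Ici 0))
    (hGlim : ∃ C : ℝ, ∀ᶠ t in atTop, t * G (t ^ ((1 : ℝ) / 2)) / G t ≤ C)
    (γ : EuclideanSpace ℝ (Fin n) → ℝ) (hγC2 : ContDiff ℝ 2 γ)
    (hγnonneg : ∀ x, 0 ≤ γ x)
    (hγ1 : Tendsto γ (cocompact (EuclideanSpace ℝ (Fin n))) atTop)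
    (hγ2 : ∃ A > (0 : ℝ), ∃ K₁ : Set (EuclideanSpace ℝ (Fin n)), IsCompact K₁ ∧
      ∀ x ∉ K₁, ‖gradient γ x‖ ≤ A * (γ x) ^ ((1 : ℝ) / 2))
    (hγ3 : ∃ B > (0 : ℝ), ∃ K₂ : Set (EuclideanSpace ℝ (Fin n)), IsCompact K₂ ∧
      ∀ x ∉ K₂, Lop P γ x ≤ B * (γ x) ^ ((1 : ℝ) / 2) * (G ((γ x) ^ ((1 : ℝ) / 2))) ^ ((1 : ℝ) / 2)) :
    ∀ u : EuclideanSpace ℝ (Fin n) → ℝ, ContDiff ℝ 2 u → BddAbove (Set.range u) →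
      ∃ xs : ℕ → EuclideanSpace ℝ (Fin n), ∀ j : ℕ, 1 ≤ j →
        sSup (Set.range u) - 1 / (j : ℝ) < u (xs j) ∧
        ‖gradient u (xs j)‖ < 1 / (j : ℝ) ∧
        Lop P u (xs j) < 1 / (j : ℝ) := by
  intro u hu hub
  obtain ⟨C, hC⟩ := hGlim
  obtain ⟨A, hA, K₁, hK₁, hγ2⟩ := hγ2
  obtain ⟨B, hB, K₂, hK₂, hγ3⟩ := hγ3
  have hGc : ContinuousOn G (Set.Ici 0) := hGsmooth.continuousOn
  have hGmono : MonotoneOn G (Set.Ici 0) := by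
    refine monotoneOn_of_deriv_nonneg (convex_Ici 0) hGc ?_ ?_
    · exact (hGsmooth.differentiableOn (by simp)).mono interior_subset
    · intro t ht
      rw [← derivWithin_of_mem_nhds (mem_interior_iff_mem_nhds.1 ht)]
      exact hG' t (interior_subset ht : t ∈ Set.Ici (0:ℝ))
  have hGge : ∀ t, 0 ≤ t → G 0 ≤ G t := fun t ht => hGmono (Set.mem_Ici.2 le_rfl) ht ht
  have hGpos : ∀ t, 0 ≤ t → 0 < G t := fun t ht => hG0.trans_le (hGge t ht)
  let g : ℝ → ℝ := fun t => (Real.sqrt (G t))⁻¹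
  have hgpos : ∀ t, 0 ≤ t → 0 < g t := fun t ht => inv_pos.2 (Real.sqrt_pos.2 (hGpos t ht))
  have hgc : ContinuousOn g (Set.Ici 0) := by
    refine (hGc.sqrt).inv₀ fun t ht => (Real.sqrt_pos.2 (hGpos t ht)).ne'
  have hganti : AntitoneOn g (Set.Ici 0) := by
    intro a ha b hb hab
    exact inv_anti₀ (Real.sqrt_pos.2 (hGpos a ha)) (Real.sqrt_le_sqrt (hGmono ha hb hab))
  have hgint : ¬ IntegrableOn g (Set.Ici 0) := by
    intro h
    apply hGint
    refine h.congr_fun (fun t ht => ?_) measurableSet_Ici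
    simp only [g]
    rw [Real.sqrt_eq_rpow, ← Real.rpow_neg (hGpos t ht).le]
  obtain ⟨φ, hφc, hφconc, hφnn, hφtop⟩ := oy_phi hgc hganti hgpos hgint
  have hgγ : Continuous fun x => g (γ x) := hgc.comp_continuous hγC2.continuous hγnonneg
  have hfd : Continuous (fderiv ℝ γ) := hγC2.continuous_fderiv (by norm_num)
  have hfd1 : ContDiff ℝ 1 (fderiv ℝ γ) := hγC2.fderiv_right (by norm_num)
  have hfd2 : Continuous (fderiv ℝ (fderiv ℝ γ)) := hfd1.continuous_fderiv (by norm_num)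
  have hgrad : Continuous fun x => ‖gradient γ x‖ := by
    simp only [gradient, LinearIsometryEquiv.norm_map]
    exact hfd.norm
  have hLc : Continuous fun x => Lop P γ x := by
    have hH : Continuous fun x => hessMat γ x := by
      refine continuous_matrix fun i j => ?_
      simp only [oy_hess]
      fun_prop
    exact (hPcont.matrix_mul hH).matrix_trace
  -- key inequality
  have hkey : ∀ᶠ x in cocompact (EuclideanSpace ℝ (Fin n)),
      g (γ x) * (Real.sqrt (γ x) * Real.sqrt (G (Real.sqrt (γ x)))) ≤ Real.sqrt C := by
    filter_upwards [hγ1.eventually hC] with x hx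
    rw [← Real.sqrt_eq_rpow, div_le_iff₀ (hGpos _ (hγnonneg x))] at hx
    have hs : 0 < Real.sqrt (G (γ x)) := Real.sqrt_pos.2 (hGpos _ (hγnonneg x))
    have := Real.sqrt_le_sqrt hx
    rw [Real.sqrt_mul (hγnonneg x), Real.sqrt_mul' _ (hGpos _ (hγnonneg x)).le] at this
    simp only [g]
    rw [inv_mul_le_iff₀ hs]
    linarith
  obtain ⟨M₁, hM₁⟩ : ∃ M, ∀ x, g (γ x) * ‖gradient γ x‖ ≤ M := by
    refine oy_bdd (hgγ.mul hgrad) (M := A * (Real.sqrt C / Real.sqrt (G 0))) ?_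
    filter_upwards [hkey, hK₁.compl_mem_cocompact] with x hx hxK
    have h1 := hγ2 x hxK
    rw [← Real.sqrt_eq_rpow] at h1
    have hg := hgpos _ (hγnonneg x)
    have h0 : 0 < Real.sqrt (G 0) := Real.sqrt_pos.2 hG0
    have h2 : Real.sqrt (G 0) ≤ Real.sqrt (G (Real.sqrt (γ x))) :=
      Real.sqrt_le_sqrt (hGge _ (Real.sqrt_nonneg _))
    have h3 : g (γ x) * Real.sqrt (γ x) ≤ Real.sqrt C / Real.sqrt (G 0) := by
      rw [le_div_iff₀ h0]
      calc _ ≤ g (γ x) * Real.sqrt (γ x) * Real.sqrt (G (Real.sqrt (γ x))) :=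
            mul_le_mul_of_nonneg_left h2 (by positivity)
        _ ≤ _ := by linarith
    calc _ ≤ g (γ x) * (A * Real.sqrt (γ x)) := mul_le_mul_of_nonneg_left h1 hg.le
      _ = A * (g (γ x) * Real.sqrt (γ x)) := by ring
      _ ≤ _ := mul_le_mul_of_nonneg_left h3 hA.le
  obtain ⟨M₂, hM₂⟩ : ∃ M, ∀ x, g (γ x) * Lop P γ x ≤ M := by
    refine oy_bdd (hgγ.mul hLc) (M := B * Real.sqrt C) ?_
    filter_upwards [hkey, hK₂.compl_mem_cocompact] with x hx hxK
    have h1 := hγ3 x hxK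
    rw [← Real.sqrt_eq_rpow, ← Real.sqrt_eq_rpow] at h1
    have hg := hgpos _ (hγnonneg x)
    calc _ ≤ g (γ x) * (B * Real.sqrt (γ x) * Real.sqrt (G (Real.sqrt (γ x)))) :=
          mul_le_mul_of_nonneg_left h1 hg.le
      _ = B * (g (γ x) * (Real.sqrt (γ x) * Real.sqrt (G (Real.sqrt (γ x))))) := by ring
      _ ≤ _ := mul_le_mul_of_nonneg_left hx hB.le
  obtain ⟨b, hb⟩ := id hub
  have main : ∀ δ : ℝ, 0 < δ → ∃ x, sSup (Set.range u) - δ < u x ∧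
      ‖gradient u x‖ < δ ∧ Lop P u x < δ := by
    intro δ hδ
    obtain ⟨_, ⟨y, rfl⟩, hy⟩ := exists_lt_of_lt_csSup (Set.range_nonempty u)
      (show sSup (Set.range u) - δ / 2 < sSup (Set.range u) by linarith)
    have hφy := hφnn _ (hγnonneg y)
    let D := φ (γ y) + |M₁| + |M₂| + 1
    have hD : 0 < D := by positivity
    let ε := δ / 2 / D
    have hε : 0 < ε := by positivity
    have hεD : ε * D = δ / 2 := div_mul_cancel₀ _ hD.ne'
    have hsmall : ∀ m, m ≤ D → ε * m ≤ δ / 2 := fun m hm =>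
      (mul_le_mul_of_nonneg_left hm hε.le).trans hεD.le
    have hcont : Continuous fun x => u x - ε * φ (γ x) :=
      hu.continuous.sub (continuous_const.mul (hφc.comp hγC2.continuous))
    have hbot : Tendsto (fun x => u x - ε * φ (γ x))
        (cocompact (EuclideanSpace ℝ (Fin n))) atBot := by
      have h1 : Tendsto (fun x => ε * φ (γ x)) (cocompact (EuclideanSpace ℝ (Fin n))) atTop :=
        (hφtop.comp hγ1).const_mul_atTop hε
      have h2 : Tendsto (fun x => b + -(ε * φ (γ x)))
          (cocompact (EuclideanSpace ℝ (Fin n))) atBot :=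
        tendsto_atBot_add_const_left _ b (tendsto_neg_atTop_atBot.comp h1)
      refine tendsto_atBot_mono (fun x => ?_) h2
      have := hb ⟨x, rfl⟩
      linarith
    obtain ⟨x, hx⟩ := hcont.exists_forall_ge hbot
    have hφx := hφnn _ (hγnonneg x)
    have hmax : ∀ z, u z - (ε * g (γ x)) * γ z ≤ u x - (ε * g (γ x)) * γ x := by
      intro z
      have h1 := hx z
      have h2 := mul_le_mul_of_nonneg_left
        (hφconc (γ x) (γ z) (hγnonneg x) (hγnonneg z)) hε.le
      nlinarith
    obtain ⟨hgr, hL⟩ := oy_max hPsd hu hγC2 (ε * g (γ x)) hmax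
    have hg := hgpos _ (hγnonneg x)
    refine ⟨x, ?_, ?_, ?_⟩
    · have h1 := hx y
      have h2 := hsmall (φ (γ y)) (by
        have := abs_nonneg M₁
        have := abs_nonneg M₂
        simp only [D]; linarith)
      have h3 : 0 ≤ ε * φ (γ x) := by positivity
      linarith
    · rw [hgr, abs_of_pos (by positivity), mul_assoc]
      have := hsmall _ ((hM₁ x).trans (by
        have := le_abs_self M₁
        have := abs_nonneg M₂
        simp only [D]; linarith))
      linarith
    · rw [mul_assoc] at hL
      have := hsmall _ ((hM₂ x).trans (by
        have := le_abs_self M₂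
        have := abs_nonneg M₁
        simp only [D]; linarith))
      linarith
  have main' : ∀ j : ℕ, ∃ x, 1 ≤ j → sSup (Set.range u) - 1 / (j : ℝ) < u x ∧
      ‖gradient u x‖ < 1 / (j : ℝ) ∧ Lop P u x < 1 / (j : ℝ) := by
    intro j
    by_cases hj : 1 ≤ j
    · obtain ⟨x, hx⟩ := main (1 / (j : ℝ)) (by
        have : (0:ℝ) < j := by exact_mod_cast hj
        positivity)
      exact ⟨x, fun _ => hx⟩
    · exact ⟨0, fun h => absurd h hj⟩
  choose xs hxs using main'
  exact ⟨xs, hxs⟩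
end
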